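/- Let ψ be a regular N-function such that both ψ and its conjugate ψ* satisfy the Δ₂-condition. Then there exist constants c, C > 0, depending only on Δ₂(ψ) and Δ₂(ψ*), such that for all t ≥ 0 and all a ≥ 0: c·(ψ*)_{ψ'(a)}(t) ≤ (ψ_a)*(t) ≤ C·(ψ*)_{ψ'(a)}(t), where (ψ_a)* denotes the conjugate of the shifted N-function ψ_a and (ψ*)_{ψ'(a)} denotes the shifted N-function of ψ* with shift ψ'(a). -/

import Mathlib

open Real Filter Set Topology

noncomputable section

/-- An N-function: convex on `[0,∞)`, vanishing at `0`, positive on `(0,∞)`,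
with `ψ t / t → 0` as `t → 0⁺` and `ψ t / t → ∞` as `t → ∞`. -/
def IsNFunction (ψ : ℝ → ℝ) : Prop :=
  ConvexOn ℝ (Set.Ici 0) ψ ∧ ψ 0 = 0 ∧ (∀ t > 0, 0 < ψ t) ∧
    Filter.Tendsto (fun t => ψ t / t) (nhdsWithin 0 (Set.Ioi 0)) (nhds 0) ∧
    Filter.Tendsto (fun t => ψ t / t) Filter.atTop Filter.atTop

/-- A regular N-function: an N-function which is `C¹` on `[0,∞)`, `C²` on `(0,∞)`,
with `ψ'' t > 0` for all `t > 0`. -/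
def IsRegularNFunction (ψ : ℝ → ℝ) : Prop :=
  IsNFunction ψ ∧ ContDiffOn ℝ 1 ψ (Set.Ici 0) ∧ ContDiffOn ℝ 2 ψ (Set.Ioi 0) ∧
    ∀ t > 0, 0 < deriv (deriv ψ) t

/-- A balanced N-function with characteristics `(γ₁, γ₂)`. -/
def IsBalancedNFunction (ψ : ℝ → ℝ) (γ₁ γ₂ : ℝ) : Prop :=
  IsRegularNFunction ψ ∧ 0 < γ₁ ∧ γ₁ ≤ 1 ∧ 1 ≤ γ₂ ∧
    ∀ t > 0, γ₁ * deriv ψ t ≤ t * deriv (deriv ψ) t ∧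
      t * deriv (deriv ψ) t ≤ γ₂ * deriv ψ t

/-- The conjugate N-function `ψ*(t) = sup_{s ≥ 0} (s·t − ψ(s))`. -/
def conjNF (ψ : ℝ → ℝ) (t : ℝ) : ℝ :=
  ⨆ s : Set.Ici (0:ℝ), ((s : ℝ) * t - ψ s)

/-- `ψ` satisfies the Δ₂-condition with constant `K`. -/
def SatisfiesDelta2 (ψ : ℝ → ℝ) (K : ℝ) : Prop :=
  2 < K ∧ ∀ t ≥ (0:ℝ), ψ (2 * t) ≤ K * ψ t

/-- The derivative `ψ'_a(t) = ψ'(a+t)·t/(a+t)` of the shifted N-function. -/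
def shiftDF (ψ : ℝ → ℝ) (a t : ℝ) : ℝ := deriv ψ (a + t) * t / (a + t)

/-- The shifted N-function `ψ_a(t) = ∫₀ᵗ ψ'(a+s)·s/(a+s) ds`. -/
def shiftNF (ψ : ℝ → ℝ) (a t : ℝ) : ℝ := ∫ s in (0:ℝ)..t, shiftDF ψ a s

/-- Frobenius norm of a `d×n` real matrix. -/
def frobNorm {d n : ℕ} (P : Fin d → Fin n → ℝ) : ℝ :=
  Real.sqrt (∑ i : Fin d, ∑ j : Fin n, (P i j) ^ 2)

/-- Frobenius inner product `P : Q` of two `d×n` real matrices. -/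
def frobInner {d n : ℕ} (P Q : Fin d → Fin n → ℝ) : ℝ :=
  ∑ i : Fin d, ∑ j : Fin n, P i j * Q i j

/-- `F(P) = √(φ'(|P|)/|P|)·P` (equal to `0` at `P = 0`). -/
def FmapNF (φ : ℝ → ℝ) {d n : ℕ} (P : Fin d → Fin n → ℝ) : Fin d → Fin n → ℝ :=
  Real.sqrt (deriv φ (frobNorm P) / frobNorm P) • P

/-- `F*(P) = √((φ*)'(|P|)/|P|)·P` (equal to `0` at `P = 0`). -/
def FstarNF (φ : ℝ → ℝ) {d n : ℕ} (P : Fin d → Fin n → ℝ) : Fin d → Fin n → ℝ :=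
  Real.sqrt (deriv (conjNF φ) (frobNorm P) / frobNorm P) • P

/-- The standard basis matrix with a `1` in entry `(k,l)`. -/
def basisMat {d n : ℕ} (k : Fin d) (l : Fin n) : Fin d → Fin n → ℝ :=
  fun i j => if i = k ∧ j = l then 1 else 0

/-- `𝒜` has `φ`-structure with constants `(γ₃, γ₄)`. -/
def HasPhiStructure {d n : ℕ} (A : (Fin d → Fin n → ℝ) → (Fin d → Fin n → ℝ))
    (φ : ℝ → ℝ) (γ₃ γ₄ : ℝ) : Prop :=
  0 < γ₃ ∧ γ₃ ≤ 1 ∧ 1 < γ₄ ∧ Continuous A ∧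
    ContDiffOn ℝ 1 A {P | P ≠ 0} ∧ A 0 = 0 ∧
    (∀ P : Fin d → Fin n → ℝ, P ≠ 0 → ∀ Q : Fin d → Fin n → ℝ,
      γ₃ * (deriv φ (frobNorm P) / frobNorm P) * (frobNorm Q) ^ 2 ≤
        ∑ i : Fin d, ∑ j : Fin n, ∑ k : Fin d, ∑ l : Fin n,
          fderiv ℝ A P (basisMat k l) i j * Q i j * Q k l) ∧
    (∀ P : Fin d → Fin n → ℝ, P ≠ 0 → ∀ (i k : Fin d) (j l : Fin n),
      |fderiv ℝ A P (basisMat k l) i j| ≤ γ₄ * (deriv φ (frobNorm P) / frobNorm P))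

/-!
Write `f = ψ'`, an increasing bijection of `[0,∞)`, and `g = f⁻¹ = (ψ*)'`. The shifted function
`ψ_a` again has an increasing bijection `h(s) = f(a+s)s/(a+s)` of `[0,∞)` as its derivative, so
`(ψ_a)*` is the primitive of `h⁻¹`, while `(ψ*)_{f(a)}` is by definition the primitive of
`k(u) = g(f(a)+u)u/(f(a)+u)`. It therefore suffices that `k(h(s))` is comparable to `s`. By the
doubling of `f`, inherited from the Δ₂-condition, `f(a) + h(s)` is comparable to `f(a+s)`; applying
`g`, which is doubling as well, makes `g(f(a) + h(s))` comparable to `a+s`, and then `k(h(s))` to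
`(a+s) h(s) / f(a+s) = s`.
-/

/-- Order automorphisms of the half-line `[0,∞)`: the derivatives of strictly convex differentiable
N-functions. They are functions on `ℝ` whose values at negative arguments are irrelevant. -/
structure IsHalfLineIso (f : ℝ → ℝ) : Prop where
  strictMonoOn : StrictMonoOn f (Ici 0)
  image_Ici : f '' Ici 0 = Ici 0

namespace IsHalfLineIso

variable {f g : ℝ → ℝ} {s t : ℝ}

lemma nonneg (hf : IsHalfLineIso f) (hs : 0 ≤ s) : 0 ≤ f s :=
  hf.image_Ici.subset (mem_image_of_mem f hs)

lemma exists_eq (hf : IsHalfLineIso f) (ht : 0 ≤ t) : ∃ s, 0 ≤ s ∧ f s = t :=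
  hf.image_Ici.superset ht

lemma apply_le_apply (hf : IsHalfLineIso f) (hs : 0 ≤ s) (hst : s ≤ t) : f s ≤ f t :=
  hf.strictMonoOn.monotoneOn hs (hs.trans hst) hst

lemma map_zero (hf : IsHalfLineIso f) : f 0 = 0 := by
  obtain ⟨s, hs, hfs⟩ := hf.exists_eq le_rfl
  exact le_antisymm ((hf.apply_le_apply le_rfl hs).trans_eq hfs) (hf.nonneg le_rfl)

lemma pos (hf : IsHalfLineIso f) (hs : 0 < s) : 0 < f s :=
  hf.map_zero ▸ hf.strictMonoOn self_mem_Ici hs.le hs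

lemma continuousOn (hf : IsHalfLineIso f) : ContinuousOn f (Ici 0) := by
  have hIso := (hf.strictMonoOn.orderIso.trans (OrderIso.setCongr _ _ hf.image_Ici)).continuous
  exact continuousOn_iff_continuous_domRestrict.2 (continuous_subtype_val.comp hIso)

lemma tendsto_atTop (hf : IsHalfLineIso f) : Tendsto f atTop atTop := by
  refine Filter.tendsto_atTop.2 fun v => ?_
  obtain ⟨s, hs, hfs⟩ := hf.exists_eq (le_max_right v 0)
  filter_upwards [eventually_ge_atTop s] with t hst
  exact (le_max_left v 0).trans (hfs ▸ hf.apply_le_apply hs hst)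

lemma intervalIntegrable (hf : IsHalfLineIso f) (hs : 0 ≤ s) (ht : 0 ≤ t) :
    IntervalIntegrable f MeasureTheory.volume s t :=
  (hf.continuousOn.mono fun _ hx => (le_min hs ht).trans hx.1).intervalIntegrable

lemma of_continuousOn (hmono : StrictMonoOn f (Ici 0)) (hcont : ContinuousOn f (Ici 0))
    (hzero : f 0 = 0) (htop : Tendsto f atTop atTop) : IsHalfLineIso f where
  strictMonoOn := hmono
  image_Ici := by
    have hsurj := intermediate_value_Ici hcont htop
    rw [hzero] at hsurj
    refine Subset.antisymm ?_ hsurj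
    rintro _ ⟨s, hs, rfl⟩
    exact hzero ▸ hmono.monotoneOn self_mem_Ici hs hs

lemma of_leftInvOn (hf : IsHalfLineIso f) (hgf : LeftInvOn g f (Ici 0)) : IsHalfLineIso g where
  strictMonoOn := by
    rw [← hf.image_Ici]
    rintro _ ⟨s, hs, rfl⟩ _ ⟨t, ht, rfl⟩ hst
    rw [hgf hs, hgf ht]
    exact (hf.strictMonoOn.lt_iff_lt hs ht).1 hst
  image_Ici := by
    conv_lhs => rw [← hf.image_Ici]
    exact hgf.image_image

lemma rightInvOn (hf : IsHalfLineIso f) (hgf : LeftInvOn g f (Ici 0)) :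
    RightInvOn g f (Ici 0) := by
  rw [← hf.image_Ici]
  exact hgf.rightInvOn_image

end IsHalfLineIso

lemma hasDerivWithinAt_of_subgradient {φ g : ℝ → ℝ} {S : Set ℝ} {x : ℝ} (hx : x ∈ S)
    (hg : ContinuousWithinAt g S x) (hsub : ∀ s ∈ S, ∀ t ∈ S, φ s + g s * (t - s) ≤ φ t) :
    HasDerivWithinAt φ (g x) S x := by
  rw [hasDerivWithinAt_iff_isLittleO, Asymptotics.isLittleO_iff]
  intro ε hε
  filter_upwards [self_mem_nhdsWithin, Metric.tendsto_nhds.1 hg ε hε] with y hy hgy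
  have hlower := hsub x hx y hy
  have hupper := hsub y hy x hx
  rw [Real.norm_eq_abs, Real.norm_eq_abs, smul_eq_mul, abs_of_nonneg (by linarith)]
  calc φ y - φ x - (y - x) * g x ≤ (g y - g x) * (y - x) := by linarith
    _ ≤ |g y - g x| * |y - x| := (le_abs_self _).trans_eq (abs_mul _ _)
    _ ≤ ε * |y - x| := by gcongr; exact hgy.le

lemma deriv_eq_zero_of_hasDerivWithinAt_Ici {φ : ℝ → ℝ} {x : ℝ}
    (h : HasDerivWithinAt φ 0 (Ici x) x) : deriv φ x = 0 := by
  by_cases hφ : DifferentiableAt ℝ φ x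
  · exact (uniqueDiffWithinAt_Ici x).eq_deriv _ hφ.hasDerivAt.hasDerivWithinAt h
  · exact deriv_zero_of_not_differentiableAt hφ

lemma mul_sub_le_integral_of_monotoneOn {f : ℝ → ℝ} {s t : ℝ} (hf : MonotoneOn f (uIcc s t)) :
    f s * (t - s) ≤ ∫ x in s..t, f x := by
  have hint := hf.intervalIntegrable (μ := MeasureTheory.volume)
  rcases le_total s t with hst | hts
  · rw [uIcc_of_le hst] at hf
    have h := intervalIntegral.integral_mono_on hst (intervalIntegrable_const (c := f s)) hint
      fun x hx => hf (left_mem_Icc.2 hst) hx hx.1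
    rwa [intervalIntegral.integral_const, smul_eq_mul, mul_comm] at h
  · rw [uIcc_of_ge hts] at hf
    have h := intervalIntegral.integral_mono_on hts hint.symm (intervalIntegrable_const (c := f s))
      fun x hx => hf hx (right_mem_Icc.2 hts) hx.2
    rw [intervalIntegral.integral_const, smul_eq_mul] at h
    rw [intervalIntegral.integral_symm]
    linarith

/-- On `[0,∞)`, `φ` is the primitive vanishing at `0` of the increasing bijection `f`; such `φ` are
the strictly convex N-functions differentiable on `(0,∞)`. The density is kept separate from
`deriv φ` because `φ` is unconstrained at negative arguments. -/
structure HasDensity (φ f : ℝ → ℝ) : Prop extends IsHalfLineIso f where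
  eq_integral : ∀ t ≥ 0, φ t = ∫ s in (0:ℝ)..t, f s

namespace HasDensity

variable {φ f : ℝ → ℝ}

lemma primitive_zero (h : HasDensity φ f) : φ 0 = 0 := by
  rw [h.eq_integral 0 le_rfl, intervalIntegral.integral_same]

lemma subgradient (h : HasDensity φ f) : ∀ s ∈ Ici 0, ∀ t ∈ Ici 0, φ s + f s * (t - s) ≤ φ t := by
  intro s hs t ht
  have hmono : MonotoneOn f (uIcc s t) :=
    h.strictMonoOn.monotoneOn.mono fun x hx => (le_min hs ht).trans hx.1
  rw [h.eq_integral s hs, h.eq_integral t ht, ← intervalIntegral.integral_add_adjacent_intervals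
    (h.intervalIntegrable le_rfl hs) (h.intervalIntegrable hs ht)]
  gcongr
  exact mul_sub_le_integral_of_monotoneOn hmono

lemma of_subgradient (hf : IsHalfLineIso f) (hzero : φ 0 = 0)
    (hsub : ∀ s ∈ Ici 0, ∀ t ∈ Ici 0, φ s + f s * (t - s) ≤ φ t) : HasDensity φ f where
  toIsHalfLineIso := hf
  eq_integral t ht := by
    have hderiv : ∀ s ∈ Ici 0, HasDerivWithinAt φ (f s) (Ici 0) s := fun s hs =>
      hasDerivWithinAt_of_subgradient hs (hf.continuousOn s hs) hsub
    have hFTC := intervalIntegral.integral_eq_sub_of_hasDerivAt_of_le ht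
      (fun s hs => (hderiv s hs.1).continuousWithinAt.mono Icc_subset_Ici_self)
      (fun s hs => (hderiv s hs.1.le).hasDerivAt (Ici_mem_nhds hs.1))
      (hf.intervalIntegrable le_rfl ht)
    rw [hFTC, hzero, sub_zero]

lemma primitive_nonneg (h : HasDensity φ f) {t : ℝ} (ht : 0 ≤ t) : 0 ≤ φ t := by
  simpa [h.map_zero, h.primitive_zero] using h.subgradient 0 self_mem_Ici t ht

lemma deriv_eqOn (h : HasDensity φ f) : EqOn (deriv φ) f (Ici 0) := by
  intro t ht
  have hderiv := hasDerivWithinAt_of_subgradient ht (h.continuousOn t ht) h.subgradient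
  rcases (mem_Ici.1 ht).eq_or_lt with rfl | hpos
  · rw [h.map_zero] at hderiv ⊢
    exact deriv_eq_zero_of_hasDerivWithinAt_Ici hderiv
  · exact (hderiv.hasDerivAt (Ici_mem_nhds hpos)).deriv

lemma primitive_le_mul {χ g : ℝ → ℝ} {C : ℝ} (hφ : HasDensity φ f) (hχ : HasDensity χ g)
    (hfg : ∀ s, 0 ≤ s → f s ≤ C * g s) {t : ℝ} (ht : 0 ≤ t) : φ t ≤ C * χ t := by
  rw [hφ.eq_integral t ht, hχ.eq_integral t ht, ← intervalIntegral.integral_const_mul]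
  exact intervalIntegral.integral_mono_on ht (hφ.intervalIntegrable le_rfl ht)
    ((hχ.intervalIntegrable le_rfl ht).const_mul C) fun s hs => hfg s hs.1

lemma density_two_mul_le (h : HasDensity φ f) {K : ℝ} (hK : SatisfiesDelta2 φ K) {t : ℝ}
    (ht : 0 ≤ t) : f (2 * t) ≤ K ^ 2 * f t := by
  obtain ⟨hK2, hΔ⟩ := hK
  rcases ht.eq_or_lt with rfl | hpos
  · simp [h.map_zero]
  have h2t : 0 ≤ 2 * t := by positivity
  have hupper : f (2 * t) * (2 * t) ≤ φ (2 * (2 * t)) := by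
    have := h.subgradient (2 * t) h2t (2 * (2 * t)) (mem_Ici.2 (by positivity))
    linarith [h.primitive_nonneg h2t]
  have hlower : φ t ≤ f t * t := by
    have := h.subgradient t ht 0 self_mem_Ici
    linarith [h.primitive_zero]
  refine le_of_mul_le_mul_right ?_ hpos
  calc f (2 * t) * t ≤ f (2 * t) * (2 * t) := by
        have := h.nonneg h2t
        gcongr
        linarith
    _ ≤ φ (2 * (2 * t)) := hupper
    _ ≤ K * φ (2 * t) := hΔ _ h2t
    _ ≤ K * (K * φ t) := by gcongr; exact hΔ t ht
    _ ≤ K * (K * (f t * t)) := by gcongr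
    _ = K ^ 2 * f t * t := by ring

end HasDensity

section Conjugate

variable {φ f g : ℝ → ℝ}

lemma HasDensity.isGreatest_conj (h : HasDensity φ f) (hgf : LeftInvOn g f (Ici 0)) {t : ℝ}
    (ht : 0 ≤ t) :
    IsGreatest (range fun s : Ici (0:ℝ) => (s : ℝ) * t - φ s) (g t * t - φ (g t)) := by
  have hgt : 0 ≤ g t := (h.of_leftInvOn hgf).nonneg ht
  refine ⟨⟨⟨g t, hgt⟩, rfl⟩, ?_⟩
  rintro _ ⟨⟨s, hs⟩, rfl⟩
  have := h.subgradient (g t) hgt s hs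
  rw [h.rightInvOn hgf ht] at this
  linarith

lemma HasDensity.hasDensity_conjNF (h : HasDensity φ f) (hgf : LeftInvOn g f (Ici 0)) :
    HasDensity (conjNF φ) g := by
  have hg := h.of_leftInvOn hgf
  have hmax : ∀ t ∈ Ici 0, conjNF φ t = g t * t - φ (g t) := fun t ht =>
    (h.isGreatest_conj hgf ht).csSup_eq
  refine .of_subgradient hg ?_ fun s hs t ht => ?_
  · rw [hmax 0 self_mem_Ici, hg.map_zero, h.primitive_zero]
    ring
  · have hle : g s * t - φ (g s) ≤ g t * t - φ (g t) :=
      (h.isGreatest_conj hgf ht).2 ⟨⟨g s, hg.nonneg hs⟩, rfl⟩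
    rw [hmax s hs, hmax t ht]
    linarith

lemma HasDensity.leftInvOn_deriv_conjNF (h : HasDensity φ f) :
    LeftInvOn (deriv (conjNF φ)) f (Ici 0) := by
  have hinv : LeftInvOn (Function.invFunOn f (Ici 0)) f (Ici 0) :=
    h.strictMonoOn.injOn.leftInvOn_invFunOn
  intro s hs
  rw [(h.hasDensity_conjNF hinv).deriv_eqOn (h.nonneg hs), hinv hs]

end Conjugate

section Shift

variable {ψ : ℝ → ℝ} {a : ℝ}

lemma shiftDF_zero_right (ψ : ℝ → ℝ) (a : ℝ) : shiftDF ψ a 0 = 0 := by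
  simp [shiftDF]

lemma shiftDF_zero_left (h : IsHalfLineIso (deriv ψ)) : shiftDF ψ 0 = deriv ψ := by
  funext s
  rcases eq_or_ne s 0 with rfl | hs
  · rw [shiftDF_zero_right, h.map_zero]
  · rw [shiftDF, zero_add, mul_div_cancel_right₀ _ hs]

lemma continuousOn_shiftDF (h : IsHalfLineIso (deriv ψ)) (ha : 0 < a) :
    ContinuousOn (shiftDF ψ a) (Ici 0) := by
  have hmaps : MapsTo (fun s => a + s) (Ici 0) (Ici 0) := fun s hs => add_nonneg ha.le hs
  exact ((h.continuousOn.comp (by fun_prop) hmaps).mul continuousOn_id).div (by fun_prop)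
    fun s hs => (add_pos_of_pos_of_nonneg ha hs).ne'

lemma strictMonoOn_shiftDF (h : IsHalfLineIso (deriv ψ)) (ha : 0 < a) :
    StrictMonoOn (shiftDF ψ a) (Ici 0) := by
  intro s hs t ht hst
  rw [mem_Ici] at hs ht
  have hderiv : deriv ψ (a + s) < deriv ψ (a + t) :=
    h.strictMonoOn (mem_Ici.2 (by positivity)) (mem_Ici.2 (by positivity)) (by linarith)
  have hratio : s / (a + s) < t / (a + t) := by
    rw [div_lt_div_iff₀ (by positivity) (by positivity)]
    nlinarith
  simp only [shiftDF, mul_div_assoc]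
  exact mul_lt_mul'' hderiv hratio (h.nonneg (by positivity)) (by positivity)

lemma tendsto_shiftDF_atTop (h : IsHalfLineIso (deriv ψ)) (ha : 0 < a) :
    Tendsto (shiftDF ψ a) atTop atTop := by
  refine tendsto_atTop_mono' _ ?_ (h.tendsto_atTop.atTop_div_const two_pos)
  filter_upwards [eventually_ge_atTop a] with s has
  have hs : 0 < s := ha.trans_le has
  have hle : deriv ψ s ≤ deriv ψ (a + s) := h.apply_le_apply hs.le (by linarith)
  have hnonneg : 0 ≤ deriv ψ (a + s) := h.nonneg (by positivity)
  rw [shiftDF, div_le_div_iff₀ two_pos (by positivity)]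
  nlinarith

lemma isHalfLineIso_shiftDF (h : IsHalfLineIso (deriv ψ)) (ha : 0 ≤ a) :
    IsHalfLineIso (shiftDF ψ a) := by
  rcases ha.eq_or_lt with rfl | ha
  · rwa [shiftDF_zero_left h]
  · exact .of_continuousOn (strictMonoOn_shiftDF h ha) (continuousOn_shiftDF h ha)
      (shiftDF_zero_right ψ a) (tendsto_shiftDF_atTop h ha)

lemma hasDensity_shiftNF (h : IsHalfLineIso (deriv ψ)) (ha : 0 ≤ a) :
    HasDensity (shiftNF ψ a) (shiftDF ψ a) where
  toIsHalfLineIso := isHalfLineIso_shiftDF h ha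
  eq_integral _ _ := rfl

end Shift

section Comparison

variable {ψ χ : ℝ → ℝ} {a s L M : ℝ}

lemma shiftDF_mul_add (h : 0 < a + s) : shiftDF ψ a s * (a + s) = deriv ψ (a + s) * s :=
  div_mul_cancel₀ _ h.ne'

lemma deriv_add_shiftDF_le (h : IsHalfLineIso (deriv ψ)) (ha : 0 ≤ a) (hs : 0 < s) :
    deriv ψ a + shiftDF ψ a s ≤ 2 * deriv ψ (a + s) := by
  have hderiv : deriv ψ a ≤ deriv ψ (a + s) := h.apply_le_apply ha (by linarith)
  have hshift : shiftDF ψ a s ≤ deriv ψ (a + s) := by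
    have hnonneg : 0 ≤ deriv ψ (a + s) := h.nonneg (by positivity)
    rw [shiftDF, div_le_iff₀ (by positivity)]
    gcongr
    linarith
  linarith

lemma deriv_add_le_two_mul_shiftDF (h : IsHalfLineIso (deriv ψ)) (ha : 0 ≤ a) (hs : 0 < s)
    (has : a ≤ s) : deriv ψ (a + s) ≤ 2 * shiftDF ψ a s := by
  have hnonneg : 0 ≤ deriv ψ (a + s) := h.nonneg (by positivity)
  refine le_of_mul_le_mul_right ?_ (show 0 < a + s by positivity)
  calc deriv ψ (a + s) * (a + s) ≤ deriv ψ (a + s) * (2 * s) := by gcongr; linarith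
    _ = 2 * shiftDF ψ a s * (a + s) := by rw [mul_assoc 2, shiftDF_mul_add (by positivity)]; ring

lemma deriv_add_le_mul_deriv_add_shiftDF (h : IsHalfLineIso (deriv ψ)) (hL : 2 ≤ L)
    (hdouble : ∀ t, 0 ≤ t → deriv ψ (2 * t) ≤ L * deriv ψ t) (ha : 0 ≤ a) (hs : 0 < s) :
    deriv ψ (a + s) ≤ L * (deriv ψ a + shiftDF ψ a s) := by
  have hderiv : 0 ≤ deriv ψ a := h.nonneg ha
  have hshift : 0 ≤ shiftDF ψ a s := (isHalfLineIso_shiftDF h ha).nonneg hs.le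
  rcases le_total s a with hsa | has
  · calc deriv ψ (a + s) ≤ deriv ψ (2 * a) := h.apply_le_apply (by positivity) (by linarith)
      _ ≤ L * deriv ψ a := hdouble a ha
      _ ≤ L * (deriv ψ a + shiftDF ψ a s) := by gcongr; linarith
  · calc deriv ψ (a + s) ≤ 2 * shiftDF ψ a s := deriv_add_le_two_mul_shiftDF h ha hs has
      _ ≤ L * (deriv ψ a + shiftDF ψ a s) := by gcongr; linarith

lemma inverse_add_shiftDF_le (h : IsHalfLineIso (deriv ψ))
    (hinv : LeftInvOn (deriv χ) (deriv ψ) (Ici 0))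
    (hdouble : ∀ t, 0 ≤ t → deriv χ (2 * t) ≤ M * deriv χ t) (ha : 0 ≤ a) (hs : 0 < s) :
    deriv χ (deriv ψ a + shiftDF ψ a s) ≤ M * (a + s) := by
  have has : 0 ≤ a + s := by positivity
  have hsum : 0 ≤ deriv ψ a + shiftDF ψ a s :=
    add_nonneg (h.nonneg ha) ((isHalfLineIso_shiftDF h ha).nonneg hs.le)
  calc deriv χ (deriv ψ a + shiftDF ψ a s) ≤ deriv χ (2 * deriv ψ (a + s)) :=
        (h.of_leftInvOn hinv).apply_le_apply hsum (deriv_add_shiftDF_le h ha hs)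
    _ ≤ M * deriv χ (deriv ψ (a + s)) := hdouble _ (h.nonneg has)
    _ = M * (a + s) := by rw [hinv has]

lemma add_le_mul_inverse_add_shiftDF (h : IsHalfLineIso (deriv ψ))
    (hinv : LeftInvOn (deriv χ) (deriv ψ) (Ici 0)) (hM : 2 ≤ M)
    (hdouble : ∀ t, 0 ≤ t → deriv χ (2 * t) ≤ M * deriv χ t) (ha : 0 ≤ a) (hs : 0 < s) :
    a + s ≤ M * deriv χ (deriv ψ a + shiftDF ψ a s) := by
  have hχ := h.of_leftInvOn hinv
  have hderiv : 0 ≤ deriv ψ a := h.nonneg ha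
  have hshift : 0 ≤ shiftDF ψ a s := (isHalfLineIso_shiftDF h ha).nonneg hs.le
  rcases le_total s a with hsa | has
  · have hle : a ≤ deriv χ (deriv ψ a + shiftDF ψ a s) :=
      (hinv ha).symm.trans_le (hχ.apply_le_apply hderiv (by linarith))
    calc a + s ≤ 2 * a := by linarith
      _ ≤ M * deriv χ (deriv ψ a + shiftDF ψ a s) := by gcongr
  · have hpos : 0 ≤ a + s := by positivity
    calc a + s = deriv χ (deriv ψ (a + s)) := (hinv hpos).symm
      _ ≤ deriv χ (2 * shiftDF ψ a s) :=
        hχ.apply_le_apply (h.nonneg hpos) (deriv_add_le_two_mul_shiftDF h ha hs has)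
      _ ≤ M * deriv χ (shiftDF ψ a s) := hdouble _ hshift
      _ ≤ M * deriv χ (deriv ψ a + shiftDF ψ a s) := by
        gcongr
        exact hχ.apply_le_apply hshift (by linarith)

lemma shiftDF_shiftDF_le (h : IsHalfLineIso (deriv ψ))
    (hinv : LeftInvOn (deriv χ) (deriv ψ) (Ici 0)) (hL : 2 ≤ L) (hM : 0 ≤ M)
    (hdouble : ∀ t, 0 ≤ t → deriv ψ (2 * t) ≤ L * deriv ψ t)
    (hdouble' : ∀ t, 0 ≤ t → deriv χ (2 * t) ≤ M * deriv χ t) (ha : 0 ≤ a) (hs : 0 ≤ s) :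
    shiftDF χ (deriv ψ a) (shiftDF ψ a s) ≤ L * M * s := by
  rcases hs.eq_or_lt with rfl | hs
  · simp only [shiftDF_zero_right, mul_zero, le_refl]
  have hshift : 0 < shiftDF ψ a s := (isHalfLineIso_shiftDF h ha).pos hs
  have hsum : 0 < deriv ψ a + shiftDF ψ a s := add_pos_of_nonneg_of_pos (h.nonneg ha) hshift
  refine le_of_mul_le_mul_right ?_ hsum
  calc shiftDF χ (deriv ψ a) (shiftDF ψ a s) * (deriv ψ a + shiftDF ψ a s)
      = deriv χ (deriv ψ a + shiftDF ψ a s) * shiftDF ψ a s := shiftDF_mul_add hsum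
    _ ≤ M * (a + s) * shiftDF ψ a s := by
      gcongr
      exact inverse_add_shiftDF_le h hinv hdouble' ha hs
    _ = M * (deriv ψ (a + s) * s) := by rw [← shiftDF_mul_add (by positivity)]; ring
    _ ≤ M * (L * (deriv ψ a + shiftDF ψ a s) * s) := by
      gcongr
      exact deriv_add_le_mul_deriv_add_shiftDF h hL hdouble ha hs
    _ = L * M * s * (deriv ψ a + shiftDF ψ a s) := by ring

lemma le_mul_shiftDF_shiftDF (h : IsHalfLineIso (deriv ψ))
    (hinv : LeftInvOn (deriv χ) (deriv ψ) (Ici 0)) (hM : 2 ≤ M)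
    (hdouble : ∀ t, 0 ≤ t → deriv χ (2 * t) ≤ M * deriv χ t) (ha : 0 ≤ a) (hs : 0 ≤ s) :
    s ≤ 2 * M * shiftDF χ (deriv ψ a) (shiftDF ψ a s) := by
  rcases hs.eq_or_lt with rfl | hs
  · simp only [shiftDF_zero_right, mul_zero, le_refl]
  have hshift : 0 < shiftDF ψ a s := (isHalfLineIso_shiftDF h ha).pos hs
  have hsum : 0 < deriv ψ a + shiftDF ψ a s := add_pos_of_nonneg_of_pos (h.nonneg ha) hshift
  refine le_of_mul_le_mul_right ?_ hsum
  calc s * (deriv ψ a + shiftDF ψ a s) ≤ s * (2 * deriv ψ (a + s)) := by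
        gcongr
        exact deriv_add_shiftDF_le h ha hs
    _ = 2 * shiftDF ψ a s * (a + s) := by rw [mul_assoc 2, shiftDF_mul_add (by positivity)]; ring
    _ ≤ 2 * shiftDF ψ a s * (M * deriv χ (deriv ψ a + shiftDF ψ a s)) := by
      gcongr
      exact add_le_mul_inverse_add_shiftDF h hinv hM hdouble ha hs
    _ = 2 * M * (deriv χ (deriv ψ a + shiftDF ψ a s) * shiftDF ψ a s) := by ring
    _ = 2 * M * shiftDF χ (deriv ψ a) (shiftDF ψ a s) * (deriv ψ a + shiftDF ψ a s) := by
      rw [← shiftDF_mul_add hsum, ← mul_assoc]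

end Comparison

section ConjugateOfShift

variable {ψ : ℝ → ℝ} {a t K₁ K₂ : ℝ}

lemma SatisfiesDelta2.two_le_sq {K : ℝ} (hK : SatisfiesDelta2 ψ K) : 2 ≤ K ^ 2 := by
  nlinarith [hK.1]

lemma shiftNF_conjNF_le (h : HasDensity ψ (deriv ψ)) (hK₁ : SatisfiesDelta2 ψ K₁)
    (hK₂ : SatisfiesDelta2 (conjNF ψ) K₂) (ha : 0 ≤ a) (ht : 0 ≤ t) :
    shiftNF (conjNF ψ) (deriv ψ a) t ≤ K₁ ^ 2 * K₂ ^ 2 * conjNF (shiftNF ψ a) t := by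
  have hinv := h.leftInvOn_deriv_conjNF
  have hconj := h.hasDensity_conjNF hinv
  have hshift := hasDensity_shiftNF h.toIsHalfLineIso ha
  have hinv' := hshift.leftInvOn_deriv_conjNF
  refine (hasDensity_shiftNF hconj.toIsHalfLineIso (h.nonneg ha)).primitive_le_mul
    (hshift.hasDensity_conjNF hinv') (fun u hu => ?_) ht
  obtain ⟨s, hs, rfl⟩ := hshift.exists_eq hu
  rw [hinv' hs]
  exact shiftDF_shiftDF_le h.toIsHalfLineIso hinv hK₁.two_le_sq (sq_nonneg K₂)
    (fun _ => h.density_two_mul_le hK₁) (fun _ => hconj.density_two_mul_le hK₂) ha hs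

lemma conjNF_shiftNF_le (h : HasDensity ψ (deriv ψ)) (hK₂ : SatisfiesDelta2 (conjNF ψ) K₂)
    (ha : 0 ≤ a) (ht : 0 ≤ t) :
    conjNF (shiftNF ψ a) t ≤ 2 * K₂ ^ 2 * shiftNF (conjNF ψ) (deriv ψ a) t := by
  have hinv := h.leftInvOn_deriv_conjNF
  have hconj := h.hasDensity_conjNF hinv
  have hshift := hasDensity_shiftNF h.toIsHalfLineIso ha
  have hinv' := hshift.leftInvOn_deriv_conjNF
  refine (hshift.hasDensity_conjNF hinv').primitive_le_mul
    (hasDensity_shiftNF hconj.toIsHalfLineIso (h.nonneg ha)) (fun u hu => ?_) ht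
  obtain ⟨s, hs, rfl⟩ := hshift.exists_eq hu
  rw [hinv' hs]
  exact le_mul_shiftDF_shiftDF h.toIsHalfLineIso hinv hK₂.two_le_sq
    (fun _ => hconj.density_two_mul_le hK₂) ha hs

end ConjugateOfShift

section NFunction

variable {ψ : ℝ → ℝ}

lemma add_mul_sub_le_of_convexOn {S : Set ℝ} {d s t : ℝ} (hψ : ConvexOn ℝ S ψ) (hs : s ∈ S)
    (ht : t ∈ S) (hd : HasDerivWithinAt ψ d S s) : ψ s + d * (t - s) ≤ ψ t := by
  rcases lt_trichotomy s t with hst | rfl | hts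
  · have := hψ.le_slope_of_hasDerivWithinAt hs ht hst hd
    rw [slope_def_field, le_div_iff₀ (sub_pos.2 hst)] at this
    linarith
  · simp
  · have := hψ.slope_le_of_hasDerivWithinAt ht hs hts hd
    rw [slope_def_field, div_le_iff₀ (sub_pos.2 hts)] at this
    linarith

lemma IsNFunction.hasDerivWithinAt_zero (hψ : IsNFunction ψ) :
    HasDerivWithinAt ψ 0 (Ici 0) 0 := by
  obtain ⟨-, hzero, -, hlim, -⟩ := hψ
  rw [← hasDerivWithinAt_Ioi_iff_Ici, hasDerivWithinAt_iff_tendsto_slope' self_notMem_Ioi]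
  refine hlim.congr fun t => ?_
  rw [slope_def_field, hzero, sub_zero, sub_zero]

lemma IsNFunction.hasDerivWithinAt_deriv (hψ : IsNFunction ψ)
    (hdiff : DifferentiableOn ℝ ψ (Ioi 0)) {t : ℝ} (ht : 0 ≤ t) :
    HasDerivWithinAt ψ (deriv ψ t) (Ici 0) t := by
  rcases ht.eq_or_lt with rfl | hpos
  · rw [deriv_eq_zero_of_hasDerivWithinAt_Ici hψ.hasDerivWithinAt_zero]
    exact hψ.hasDerivWithinAt_zero
  · exact (hdiff.differentiableAt (Ioi_mem_nhds hpos)).hasDerivAt.hasDerivWithinAt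

lemma IsNFunction.div_le_deriv (hψ : IsNFunction ψ) (hdiff : DifferentiableOn ℝ ψ (Ioi 0)) {t : ℝ}
    (ht : 0 < t) : ψ t / t ≤ deriv ψ t := by
  have := add_mul_sub_le_of_convexOn hψ.1 ht.le self_mem_Ici (hψ.hasDerivWithinAt_deriv hdiff ht.le)
  rw [div_le_iff₀ ht]
  linarith [hψ.2.1]

lemma IsNFunction.isHalfLineIso_deriv (hψ : IsNFunction ψ) (hstrict : StrictConvexOn ℝ (Ici 0) ψ)
    (hdiff : DifferentiableOn ℝ ψ (Ioi 0)) : IsHalfLineIso (deriv ψ) := by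
  have hderiv : ∀ t ∈ Ici 0, HasDerivWithinAt ψ (deriv ψ t) (Ici 0) t := fun t =>
    hψ.hasDerivWithinAt_deriv hdiff
  have hmono : StrictMonoOn (deriv ψ) (Ici 0) :=
    (hstrict.strictMonoOn_derivWithin fun t ht => (hderiv t ht).differentiableWithinAt).congr
      fun t ht => (hderiv t ht).derivWithin (uniqueDiffOn_Ici 0 t ht)
  have hzero : deriv ψ 0 = 0 := deriv_eq_zero_of_hasDerivWithinAt_Ici hψ.hasDerivWithinAt_zero
  refine ⟨hmono, Subset.antisymm ?_ fun v hv => ?_⟩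
  · rintro _ ⟨t, ht, rfl⟩
    exact hzero ▸ hmono.monotoneOn self_mem_Ici ht ht
  · obtain ⟨R, hvR, hR⟩ :=
      ((hψ.2.2.2.2.eventually_ge_atTop v).and (eventually_gt_atTop 0)).exists
    exact (ordConnected_Ici.image_hasDerivWithinAt hderiv).out ⟨0, self_mem_Ici, hzero⟩
      ⟨R, hR.le, rfl⟩ ⟨hv, hvR.trans (hψ.div_le_deriv hdiff hR)⟩

lemma IsNFunction.hasDensity_deriv (hψ : IsNFunction ψ) (hstrict : StrictConvexOn ℝ (Ici 0) ψ)
    (hdiff : DifferentiableOn ℝ ψ (Ioi 0)) : HasDensity ψ (deriv ψ) :=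
  .of_subgradient (hψ.isHalfLineIso_deriv hstrict hdiff) hψ.2.1 fun _ hs _ ht =>
    add_mul_sub_le_of_convexOn hψ.1 hs ht (hψ.hasDerivWithinAt_deriv hdiff hs)

lemma IsRegularNFunction.strictConvexOn (hψ : IsRegularNFunction ψ) :
    StrictConvexOn ℝ (Ici 0) ψ :=
  strictConvexOn_of_deriv2_pos (convex_Ici 0) hψ.2.1.continuousOn fun t ht =>
    hψ.2.2.2 t (interior_Ici.subset ht)

lemma IsRegularNFunction.differentiableOn (hψ : IsRegularNFunction ψ) :
    DifferentiableOn ℝ ψ (Ioi 0) :=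
  hψ.2.2.1.differentiableOn two_ne_zero

end NFunction

theorem conj_shifted_equiv_general (K₁ K₂ : ℝ) :
    ∃ c > (0:ℝ), ∃ C > (0:ℝ), ∀ ψ : ℝ → ℝ, IsNFunction ψ → StrictConvexOn ℝ (Ici 0) ψ →
      DifferentiableOn ℝ ψ (Ioi 0) → SatisfiesDelta2 ψ K₁ → SatisfiesDelta2 (conjNF ψ) K₂ →
      ∀ a ≥ (0:ℝ), ∀ t ≥ (0:ℝ),
        c * shiftNF (conjNF ψ) (deriv ψ a) t ≤ conjNF (shiftNF ψ a) t ∧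
        conjNF (shiftNF ψ a) t ≤ C * shiftNF (conjNF ψ) (deriv ψ a) t := by
  by_cases hK : 2 < K₁ ∧ 2 < K₂
  · have hK₁pos : 0 < K₁ := two_pos.trans hK.1
    have hK₂pos : 0 < K₂ := two_pos.trans hK.2
    refine ⟨(K₁ ^ 2 * K₂ ^ 2)⁻¹, by positivity, 2 * K₂ ^ 2, by positivity, ?_⟩
    intro ψ hψ hstrict hdiff hK₁ hK₂ a ha t ht
    have h : HasDensity ψ (deriv ψ) := hψ.hasDensity_deriv hstrict hdiff
    exact ⟨(inv_mul_le_iff₀ (by positivity)).2 (shiftNF_conjNF_le h hK₁ hK₂ ha ht),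
      conjNF_shiftNF_le h hK₂ ha ht⟩
  · exact ⟨1, one_pos, 1, one_pos, fun _ _ _ _ hK₁ hK₂ => absurd ⟨hK₁.1, hK₂.1⟩ hK⟩

/-- `(ψ_a)*(t) ∼ (ψ*)_{ψ'(a)}(t)` uniformly in `t, a ≥ 0`, with constants
depending only on the Δ₂-constants of `ψ` and `ψ*`. -/
theorem conj_shifted_equiv (K₁ K₂ : ℝ) :
    ∃ c > (0:ℝ), ∃ C > (0:ℝ), ∀ ψ : ℝ → ℝ, IsRegularNFunction ψ →
      SatisfiesDelta2 ψ K₁ → SatisfiesDelta2 (conjNF ψ) K₂ →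
      ∀ a ≥ (0:ℝ), ∀ t ≥ (0:ℝ),
        c * shiftNF (conjNF ψ) (deriv ψ a) t ≤ conjNF (shiftNF ψ a) t ∧
        conjNF (shiftNF ψ a) t ≤ C * shiftNF (conjNF ψ) (deriv ψ a) t := by
  obtain ⟨c, hc, C, hC, h⟩ := conj_shifted_equiv_general K₁ K₂
  exact ⟨c, hc, C, hC, fun ψ hψ => h ψ hψ.1 hψ.strictConvexOn hψ.differentiableOn⟩

end
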